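/- Let γ ∈ (0,1]. There is a constant C depending only on γ with the following property. Let h > 0 and let P ⊆ [0,h]³ be a tetrahedron with vol(P) ≥ γh³. Then for every q ∈ Q₁ and every X₀ in the closure of P: |q(X₀)| ≤ C h^{−3/2} ‖q‖_{L²(P)}. (This point-evaluation bound on a tetrahedron of volume comparable to h³ is the form in which Lemma 4.2 is applied—at the point F, to p and its partial derivatives—in the proofs of Lemmas 4.3, 4.4 and Theorem 4.7.) -/

import Mathlib

/-!
The tetrahedral shape of `P` is only used for its being a closed subset of the cube. After scaling
to `h = 1`, the bound holds on every measurable `S ⊆ [0,1]³` of volume at least `γ`: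
the quantity `∫_S q²` is bounded below, uniformly in `S` and in `q` with coefficient vector on the
unit sphere (`exists_lower_bound`), while `|q| ≤ 8 ‖coefficients‖` on the unit cube.

The lower bound is local in the coefficients (`local_lower_bound`): the zero set of a nonzero
`q` is null (`ae_triPoly_ne_zero`), so `|q| > δ` on the unit cube outside a set of volume less than
`γ / 2`, and this persists with `δ / 2` for all nearby coefficient vectors. Compactness of the unit
sphere makes it uniform. The zero set is null because, for a direction `v` at which the leading
form of `q` does not vanish, `q` restricted to any line of direction `v` is a nonzero polynomial.
-/

open MeasureTheory
open scoped RealInnerProductSpace ENNReal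

noncomputable section

abbrev V3 : Type := EuclideanSpace ℝ (Fin 3)

/-- `Q₁`: the space of trilinear polynomials on `ℝ³`. -/
def IsQ1 (p : V3 → ℝ) : Prop :=
  ∃ a₀ a₁ a₂ a₃ a₄ a₅ a₆ a₇ : ℝ, ∀ x : V3,
    p x = a₀ + a₁ * x 0 + a₂ * x 1 + a₃ * x 2
      + a₄ * (x 0 * x 1) + a₅ * (x 0 * x 2) + a₆ * (x 1 * x 2)
      + a₇ * (x 0 * x 1 * x 2)

/-- The cube `T = [0,h]³`. -/
def cube (h : ℝ) : Set V3 := {X | ∀ i, X i ∈ Set.Icc (0:ℝ) h}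

/-- `P` is a tetrahedron: the convex hull of four affinely independent points. -/
def IsTetra (P : Set V3) : Prop :=
  ∃ v : Fin 4 → V3, AffineIndependent ℝ v ∧ P = convexHull ℝ (Set.range v)

/-- The extension operator `C_T(p) = p + (β⁻/β⁺ − 1)(∇p(F)·n̄) L`, `L(X) = (X−F)·n̄`. -/
def CT (βm βp : ℝ) (F nbar : V3) (p : V3 → ℝ) : V3 → ℝ :=
  fun X => p X + (βm / βp - 1) * (fderiv ℝ p F nbar) * ⟪X - F, nbar⟫

/-- `f` is a closed face of the cube `[0,h]³` with unit normal `nf`. -/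
def IsFace (h : ℝ) (f : Set V3) (nf : V3) : Prop :=
  ∃ i : Fin 3, (nf = EuclideanSpace.single i 1 ∨ nf = -EuclideanSpace.single i 1) ∧
    (f = {X ∈ cube h | X i = 0} ∨ f = {X ∈ cube h | X i = h})

open Set Filter Topology
open scoped Pointwise

/-- The trilinear polynomial with coefficient vector `a`, in the order of the monomials used
in `IsQ1`. -/
def triPoly (a : Fin 8 → ℝ) (x : V3) : ℝ :=
  a 0 + a 1 * x 0 + a 2 * x 1 + a 3 * x 2
    + a 4 * (x 0 * x 1) + a 5 * (x 0 * x 2) + a 6 * (x 1 * x 2)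
    + a 7 * (x 0 * x 1 * x 2)

lemma continuous_triPoly (a : Fin 8 → ℝ) : Continuous (triPoly a) := by
  unfold triPoly
  fun_prop

lemma triPoly_sub (a b : Fin 8 → ℝ) (x : V3) :
    triPoly (a - b) x = triPoly a x - triPoly b x := by
  simp only [triPoly, Pi.sub_apply]
  ring

lemma triPoly_smul (c : ℝ) (a : Fin 8 → ℝ) (x : V3) :
    triPoly (c • a) x = c * triPoly a x := by
  simp only [triPoly, Pi.smul_apply, smul_eq_mul]
  ring

/-- Each of the eight monomials is at most `1` on the unit cube. -/
lemma abs_triPoly_le (a : Fin 8 → ℝ) {x : V3} (hx : x ∈ cube 1) :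
    |triPoly a x| ≤ 8 * ‖a‖ := by
  have key : ∀ i (m : ℝ), 0 ≤ m → m ≤ 1 → |a i * m| ≤ ‖a‖ := fun i m h0 h1 => by
    have h2 : |a i| ≤ ‖a‖ := norm_le_pi_norm a i
    rw [abs_mul, abs_of_nonneg h0]
    nlinarith [abs_nonneg (a i)]
  obtain ⟨p0, p1⟩ := hx 0
  obtain ⟨q0, q1⟩ := hx 1
  obtain ⟨r0, r1⟩ := hx 2
  have k0 := abs_le.1 (key 0 1 zero_le_one le_rfl)
  have k1 := abs_le.1 (key 1 _ p0 p1)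
  have k2 := abs_le.1 (key 2 _ q0 q1)
  have k3 := abs_le.1 (key 3 _ r0 r1)
  have k4 := abs_le.1 (key 4 _ (mul_nonneg p0 q0) (mul_le_one₀ p1 q0 q1))
  have k5 := abs_le.1 (key 5 _ (mul_nonneg p0 r0) (mul_le_one₀ p1 r0 r1))
  have k6 := abs_le.1 (key 6 _ (mul_nonneg q0 r0) (mul_le_one₀ q1 r0 r1))
  have k7 := abs_le.1 (key 7 _ (mul_nonneg (mul_nonneg p0 q0) r0)
    (mul_le_one₀ (mul_le_one₀ p1 q0 q1) r0 r1))
  rw [triPoly, abs_le]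
  constructor <;> linarith [k0.1, k0.2, k1.1, k1.2, k2.1, k2.2, k3.1, k3.2, k4.1, k4.2, k5.1, k5.2,
    k6.1, k6.2, k7.1, k7.2]

lemma isClosed_cube (h : ℝ) : IsClosed (cube h) := by
  have : cube h = ⋂ i : Fin 3, (fun X : V3 => X i) ⁻¹' Icc (0:ℝ) h := by
    ext; simp [cube]
  rw [this]
  exact isClosed_iInter fun i => isClosed_Icc.preimage (by fun_prop)

lemma isCompact_cube (h : ℝ) : IsCompact (cube h) := by
  have : cube h = (EuclideanSpace.equiv (Fin 3) ℝ).symm ''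
      (univ.pi fun _ : Fin 3 => Icc (0:ℝ) h) := by
    rw [ContinuousLinearEquiv.image_symm_eq_preimage]
    ext X
    simp [cube, Pi.le_def, forall_and]
  rw [this]
  exact (isCompact_univ_pi fun _ => isCompact_Icc).image (ContinuousLinearEquiv.continuous _)

lemma ae_cubic_ne_zero (c : Fin 4 → ℝ) (hc : c ≠ 0) :
    ∀ᵐ t : ℝ, c 0 + c 1 * t + c 2 * t ^ 2 + c 3 * t ^ 3 ≠ 0 := by
  let p : Polynomial ℝ := Polynomial.C (c 0) + Polynomial.C (c 1) * Polynomial.X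
    + Polynomial.C (c 2) * Polynomial.X ^ 2 + Polynomial.C (c 3) * Polynomial.X ^ 3
  have hp : p ≠ 0 := by
    intro h
    apply hc
    have e := fun n => congrArg (fun r : Polynomial ℝ => r.coeff n) h
    ext i
    have e0 := e 0
    have e1 := e 1
    have e2 := e 2
    have e3 := e 3
    simp [p, Polynomial.coeff_X, Polynomial.coeff_X_pow, Polynomial.coeff_C] at e0 e1 e2 e3
    fin_cases i <;> simp_all
  have hfin : {t : ℝ | p.IsRoot t}.Finite := Polynomial.finite_setOfPred_isRoot hp
  filter_upwards [hfin.countable.ae_notMem volume] with t ht h0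
  apply ht
  simpa [p, Polynomial.IsRoot] using h0

/-- A nonzero trilinear polynomial is nonzero almost everywhere. -/
lemma ae_triPoly_ne_zero (a : Fin 8 → ℝ) (ha : a ≠ 0) : ∀ᵐ x : V3, triPoly a x ≠ 0 := by
  -- It suffices to find a direction along which the restriction to every line is a nonzero cubic.
  have line : ∀ u v w : ℝ,
      (∀ x y z : ℝ, ![triPoly a !₂[x, y, z],
        a 1 * u + a 2 * v + a 3 * w + a 4 * (x * v + y * u) + a 5 * (x * w + z * u)
          + a 6 * (y * w + z * v) + a 7 * (x * y * w + x * z * v + y * z * u),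
        a 4 * (u * v) + a 5 * (u * w) + a 6 * (v * w)
          + a 7 * (x * v * w + y * u * w + z * u * v),
        a 7 * (u * v * w)] ≠ 0) → ∀ᵐ x : V3, triPoly a x ≠ 0 := by
    intro u v w huvw
    have hm : MeasurableSet {x : V3 | triPoly a x ≠ 0} :=
      (isClosed_singleton.preimage (continuous_triPoly a)).measurableSet.compl
    refine ae_mem_of_ae_add_linearMap_mem (LinearMap.toSpanSingleton ℝ V3 !₂[u, v, w])
      (volume : Measure ℝ) volume hm fun y => ?_
    filter_upwards [ae_cubic_ne_zero _ (huvw (y 0) (y 1) (y 2))] with t ht h0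
    apply ht
    rw [← h0]
    simp [triPoly]
    ring
  by_contra hcon
  have L := fun u v w => mt (line u v w) hcon
  push Not at L
  -- The leading form is tested degree by degree, on directions that detect its coefficients.
  have h7 : a 7 = 0 := by
    obtain ⟨x, y, z, e⟩ := L 1 1 1
    simpa using congrFun e 3
  have h4 : a 4 = 0 := by
    obtain ⟨x, y, z, e⟩ := L 1 1 0
    simpa [h7] using congrFun e 2
  have h5 : a 5 = 0 := by
    obtain ⟨x, y, z, e⟩ := L 1 0 1
    simpa [h7] using congrFun e 2
  have h6 : a 6 = 0 := by
    obtain ⟨x, y, z, e⟩ := L 0 1 1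
    simpa [h7] using congrFun e 2
  have h1 : a 1 = 0 := by
    obtain ⟨x, y, z, e⟩ := L 1 0 0
    simpa [h7, h4, h5, h6] using congrFun e 1
  have h2 : a 2 = 0 := by
    obtain ⟨x, y, z, e⟩ := L 0 1 0
    simpa [h7, h4, h5, h6] using congrFun e 1
  have h3 : a 3 = 0 := by
    obtain ⟨x, y, z, e⟩ := L 0 0 1
    simpa [h7, h4, h5, h6] using congrFun e 1
  have h0 : a 0 = 0 := by
    obtain ⟨x, y, z, e⟩ := L 0 0 0
    simpa [triPoly, h7, h4, h5, h6, h1, h2, h3] using congrFun e 0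
  apply ha
  ext i
  fin_cases i <;> simpa

/-- The sublevel sets of a nonzero trilinear polynomial in the unit cube have small volume. -/
lemma exists_small_sublevel (a : Fin 8 → ℝ) (ha : a ≠ 0) {η : ℝ≥0∞} (hη : 0 < η) :
    ∃ δ : ℝ, 0 < δ ∧ volume {x ∈ cube 1 | |triPoly a x| ≤ δ} < η := by
  let A : ℕ → Set V3 := fun n => {x ∈ cube 1 | |triPoly a x| ≤ 1 / ((n : ℝ) + 1)}
  have hA : ∀ n, IsClosed (A n) := fun n =>
    (isClosed_cube 1).inter (isClosed_le (continuous_triPoly a).abs continuous_const)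
  have hanti : Antitone A := fun m n hmn x hx =>
    ⟨hx.1, hx.2.trans (one_div_le_one_div_of_le (by positivity) (by gcongr))⟩
  have hlim := tendsto_measure_iInter_atTop (μ := (volume : Measure V3))
    (fun n => (hA n).measurableSet.nullMeasurableSet) hanti
    ⟨0, ((measure_mono fun x hx => hx.1).trans_lt (isCompact_cube 1).measure_lt_top).ne⟩
  have hnull : volume (⋂ n, A n) = 0 := by
    refine measure_mono_null (fun x hx => ?_) (ae_iff.1 (ae_triPoly_ne_zero a ha))
    simp only [mem_ofPred_eq, not_not]
    rw [mem_iInter] at hx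
    have := ge_of_tendsto' (tendsto_one_div_add_atTop_nhds_zero_nat (𝕜 := ℝ)) fun n => (hx n).2
    exact abs_eq_zero.1 (le_antisymm this (abs_nonneg _))
  rw [hnull] at hlim
  obtain ⟨n, hn⟩ := (hlim.eventually (gt_mem_nhds hη)).exists
  exact ⟨_, Nat.one_div_pos_of_nat, hn⟩

/-- `LowerBound γ B`: the integrals of `q²` over subsets of the unit cube of volume at least `γ`
are bounded below by a common positive constant for all `q` with coefficient vector in `B`. -/
def LowerBound (γ : ℝ) (B : Set (Fin 8 → ℝ)) : Prop :=
  ∃ ε : ℝ, 0 < ε ∧ ∀ b ∈ B, ∀ S : Set V3, MeasurableSet S → S ⊆ cube 1 →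
    ENNReal.ofReal γ ≤ volume S → ε ≤ ∫ X in S, triPoly b X ^ 2

lemma integrableOn_triPoly_sq (b : Fin 8 → ℝ) {S : Set V3} (hS : S ⊆ cube 1) :
    IntegrableOn (fun X => triPoly b X ^ 2) S :=
  (((continuous_triPoly b).pow 2).continuousOn.integrableOn_compact (isCompact_cube 1)).mono_set hS

/-- The bound survives a perturbation of the coefficients because the sublevel set to be removed
does not depend on the set of integration. -/
lemma local_lower_bound {γ : ℝ} (hγ : 0 < γ) (a : Fin 8 → ℝ) (ha : a ≠ 0) :
    ∃ r > 0, LowerBound γ (Metric.closedBall a r) := by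
  obtain ⟨δ, hδ, hA⟩ := exists_small_sublevel a ha (η := ENNReal.ofReal (γ / 2)) (by simpa)
  set A : Set V3 := {x ∈ cube 1 | |triPoly a x| ≤ δ} with hAdef
  have hAm : MeasurableSet A := ((isClosed_cube 1).inter
    (isClosed_le (continuous_triPoly a).abs continuous_const)).measurableSet
  -- On the unit cube, a change of the coefficients by `δ / 16` changes the values by `δ / 2`.
  refine ⟨δ / 16, by positivity, (δ / 2) ^ 2 * (γ / 2), by positivity, fun b hb S hS hSc hγS => ?_⟩
  have hlow : ∀ x ∈ S \ A, (δ / 2) ^ 2 ≤ triPoly b x ^ 2 := by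
    intro x hx
    have hx1 := hSc hx.1
    have h1 : δ < |triPoly a x| := by
      by_contra! h
      exact hx.2 ⟨hx1, h⟩
    have h2 := abs_triPoly_le (b - a) hx1
    rw [triPoly_sub] at h2
    rw [mem_closedBall_iff_norm] at hb
    have h3 := abs_sub_abs_le_abs_sub (triPoly a x) (triPoly b x)
    rw [abs_sub_comm] at h3
    rw [← sq_abs (triPoly b x)]
    gcongr
    linarith
  have hfin : volume (S \ A) ≠ ∞ :=
    ((measure_mono (sdiff_subset.trans hSc)).trans_lt (isCompact_cube 1).measure_lt_top).ne
  have hvol : γ / 2 ≤ volume.real (S \ A) := by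
    refine (ENNReal.ofReal_le_iff_le_toReal hfin).1 ?_
    have h1 : ENNReal.ofReal γ - ENNReal.ofReal (γ / 2) ≤ volume S - volume A :=
      tsub_le_tsub hγS hA.le
    rw [← ENNReal.ofReal_sub _ (by positivity), sub_half] at h1
    exact h1.trans le_measure_sdiff
  calc (δ / 2) ^ 2 * (γ / 2) ≤ (δ / 2) ^ 2 * volume.real (S \ A) := by gcongr
    _ ≤ ∫ X in S \ A, triPoly b X ^ 2 :=
      setIntegral_ge_of_const_le_real (hS.diff hAm) hfin hlow
        (integrableOn_triPoly_sq b (sdiff_subset.trans hSc))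
    _ ≤ ∫ X in S, triPoly b X ^ 2 :=
      setIntegral_mono_set (integrableOn_triPoly_sq b hSc)
        (Eventually.of_forall fun x => sq_nonneg _) sdiff_subset.eventuallyLE

lemma exists_lower_bound {γ : ℝ} (hγ : 0 < γ) :
    LowerBound γ (Metric.sphere 0 1) := by
  refine (isCompact_sphere (0 : Fin 8 → ℝ) 1).induction_on (p := LowerBound γ)
    ⟨1, one_pos, by simp⟩ ?_ ?_ ?_
  · rintro s t hst ⟨ε, hε, H⟩
    exact ⟨ε, hε, fun b hb => H b (hst hb)⟩
  · rintro s t ⟨ε, hε, H⟩ ⟨ε', hε', H'⟩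
    refine ⟨min ε ε', lt_min hε hε', fun b hb S hS hSc hγS => ?_⟩
    rcases hb with hb | hb
    · exact (min_le_left _ _).trans (H b hb S hS hSc hγS)
    · exact (min_le_right _ _).trans (H' b hb S hS hSc hγS)
  · intro a ha
    obtain ⟨r, hr, H⟩ := local_lower_bound hγ a (ne_zero_of_mem_unit_sphere ⟨a, ha⟩)
    exact ⟨_, mem_nhdsWithin_of_mem_nhds (Metric.closedBall_mem_nhds a hr), H⟩

/-- The point-evaluation bound on the unit cube, for arbitrary measurable sets. -/
lemma unit_point_bound {γ : ℝ} (hγ : 0 < γ) :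
    ∃ C : ℝ, 0 < C ∧ ∀ S : Set V3, MeasurableSet S → S ⊆ cube 1 →
      ENNReal.ofReal γ ≤ volume S → ∀ a : Fin 8 → ℝ, ∀ X₀ ∈ cube 1,
        |triPoly a X₀| ≤ C * Real.sqrt (∫ X in S, triPoly a X ^ 2) := by
  obtain ⟨ε, hε, H⟩ := exists_lower_bound hγ
  refine ⟨8 / Real.sqrt ε, by positivity, fun S hS hSc hγS a X₀ hX₀ => ?_⟩
  refine (abs_triPoly_le a hX₀).trans ?_
  have key : ε * ‖a‖ ^ 2 ≤ ∫ X in S, triPoly a X ^ 2 := by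
    rcases eq_or_ne a 0 with rfl | ha
    · simp [triPoly]
    have hn : 0 < ‖a‖ := norm_pos_iff.2 ha
    have h := H (‖a‖⁻¹ • a) (by simp [norm_smul, hn.ne']) S hS hSc hγS
    simp only [triPoly_smul, mul_pow] at h
    rw [integral_const_mul, inv_pow, ← div_eq_inv_mul, le_div_iff₀ (by positivity)] at h
    exact h
  have h := Real.sqrt_le_sqrt key
  rw [Real.sqrt_mul hε.le, Real.sqrt_sq (norm_nonneg a)] at h
  rw [div_mul_eq_mul_div, le_div_iff₀ (by positivity)]
  linarith


/-- Point-evaluation bound on a tetrahedron of volume comparable to `h³` (the form in which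
Lemma 4.2 is applied in the proofs of Lemmas 4.3, 4.4 and Theorem 4.7):
`|q(X₀)| ≤ C h^{−3/2} ‖q‖_{L²(P)}` for every `q ∈ Q₁` and `X₀ ∈ closure P`. -/
theorem tetra_point_bound (γ : ℝ) (hγ0 : 0 < γ) (hγ1 : γ ≤ 1) :
    ∃ C : ℝ, 0 < C ∧
      ∀ (h : ℝ), 0 < h →
      ∀ P : Set V3, IsTetra P → P ⊆ cube h →
        ENNReal.ofReal (γ * h ^ 3) ≤ volume P →
      ∀ q : V3 → ℝ, IsQ1 q → ∀ X₀ ∈ closure P,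
        |q X₀| ≤ C * (Real.sqrt (h ^ 3))⁻¹ * Real.sqrt (∫ X in P, (q X) ^ 2) := by
  obtain ⟨C, hC, H⟩ := unit_point_bound hγ0
  refine ⟨C, hC, fun h hh P hP hPc hvol q hq X₀ hX₀ => ?_⟩
  have hPclosed : IsClosed P := by
    obtain ⟨v, -, rfl⟩ := hP
    exact (finite_range v).isClosed_convexHull ℝ
  have hscale : ∀ x ∈ cube h, h⁻¹ • x ∈ cube 1 := by
    intro x hx i
    obtain ⟨h0, h1⟩ := hx i
    simp only [PiLp.smul_apply, smul_eq_mul, mem_Icc]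
    exact ⟨by positivity, by rw [inv_mul_le_iff₀ hh]; simpa using h1⟩
  obtain ⟨a₀, a₁, a₂, a₃, a₄, a₅, a₆, a₇, hq⟩ := hq
  -- The coefficients of `X ↦ q (h • X)`.
  let a : Fin 8 → ℝ := ![a₀, h * a₁, h * a₂, h * a₃, h ^ 2 * a₄, h ^ 2 * a₅, h ^ 2 * a₆, h ^ 3 * a₇]
  have hqa : ∀ x, triPoly a x = q (h • x) := by
    intro x
    rw [hq]
    simp [triPoly, a]
    ring
  have hdim : Module.finrank ℝ V3 = 3 := by simp
  have hvol' : ENNReal.ofReal γ ≤ volume (h⁻¹ • P) := by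
    rw [Measure.addHaar_smul_of_nonneg _ (inv_nonneg.2 hh.le), hdim]
    calc ENNReal.ofReal γ = ENNReal.ofReal (h⁻¹ ^ 3) * ENNReal.ofReal (γ * h ^ 3) := by
          rw [← ENNReal.ofReal_mul (by positivity)]
          congr 1
          field_simp
      _ ≤ _ := by gcongr
  have key := H (h⁻¹ • P) (hPclosed.smul_of_ne_zero (inv_ne_zero hh.ne')).measurableSet
    (by rintro _ ⟨x, hx, rfl⟩; exact hscale x (hPc hx)) hvol' a (h⁻¹ • X₀)
    (hscale _ (hPc (hPclosed.closure_eq ▸ hX₀)))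
  simp only [hqa] at key
  rw [smul_inv_smul₀ hh.ne',
    Measure.setIntegral_comp_smul_of_pos volume (fun x => q x ^ 2) _ hh, hdim,
    smul_inv_smul₀ hh.ne', smul_eq_mul, Real.sqrt_mul (by positivity), Real.sqrt_inv,
    ← mul_assoc] at key
  exact key
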